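/- The four elements P₁, P₂, P₃, P₄ form a basis of the third term of the lower central series of B(4,3): the subgroup of B(4,3) generated by {P₁, P₂, P₃, P₄} equals γ₃(B(4,3)), and γ₃(B(4,3)) has exactly 3⁴ = 81 elements. -/

import Mathlib

/-- The free Burnside group `B(4,3)` of exponent 3 on four generators:
the free group on four generators modulo the normal closure of all cubes. -/
abbrev B43 : Type :=
  FreeGroup (Fin 4) ⧸ Subgroup.normalClosure {w : FreeGroup (Fin 4) | ∃ v, w = v ^ 3}

/-- The images `x₁, x₂, x₃, x₄` of the free generators in `B(4,3)`. -/
def x (i : Fin 4) : B43 := QuotientGroup.mk (FreeGroup.of i)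

/-- The elements `P_i` of `B(4,3)`:
`P_i = x₁x₂⁻¹x₃x₄⁻¹x₁⁻¹x₂x₃⁻¹x₄ · x_i · x₄x₃⁻¹x₂x₁⁻¹x₄⁻¹x₃x₂⁻¹x₁ · x_i⁻¹`. -/
def P (i : Fin 4) : B43 :=
  x 0 * (x 1)⁻¹ * x 2 * (x 3)⁻¹ * (x 0)⁻¹ * x 1 * (x 2)⁻¹ * x 3 * x i *
    (x 3 * (x 2)⁻¹ * x 1 * (x 0)⁻¹ * (x 3)⁻¹ * x 2 * (x 1)⁻¹ * x 0) * (x i)⁻¹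

/-!
In a group of exponent 3 every element commutes with its conjugates, so `⁅⁅a, b⁆, b⁆ = 1`. By Levi's
theorem `⁅⁅a, b⁆, c⁆` is then alternating in `a`, `b`, `c`, and `⁅⁅⁅a, b⁆, c⁆, d⁆` is its own
inverse, hence trivial in exponent 3. So `γ₃` is an elementary abelian 3-group, generated by the
`⁅⁅xᵢ, xⱼ⁆, xₖ⁆` with `i < j < k`; on four generators it has at most `3⁴` elements.

Each `P i` is a commutator `⁅u, y⁆` with `u ∈ γ₂`, hence lies in `γ₃`. Killing one generator at a
time maps `B(4,3)` to a group of affine maps of the exterior algebra of `𝔽₃²`, where the `P i`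
become central and the four resulting coordinates form an invertible matrix. So the products
`∏ P i ^ vᵢ` with `v ∈ 𝔽₃⁴` are pairwise distinct, and the `P i` generate at least `3⁴` elements.
-/

open Subgroup
open scoped commutatorElement

section Commutators

variable {G : Type*} [Group G]

theorem commutator_closure_le {S T : Set G} {K : Subgroup G} [K.Normal]
    (h : ∀ a ∈ S, ∀ b ∈ T, ⁅a, b⁆ ∈ K) : ⁅closure S, closure T⁆ ≤ K := by
  rw [← QuotientGroup.ker_mk' K, ← Subgroup.map_eq_bot_iff, map_commutator, MonoidHom.map_closure,
    MonoidHom.map_closure, commutator_eq_bot_iff_le_centralizer, centralizer_closure, closure_le]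
  rintro _ ⟨a, ha, rfl⟩ _ ⟨b, hb, rfl⟩
  refine (commutatorElement_eq_one_iff_mul_comm.1 ?_).symm
  rw [← map_commutatorElement]
  exact (QuotientGroup.eq_one_iff _).2 (h a ha b hb)

theorem lowerCentralSeries_two_le {S : Set G} (hS : closure S = ⊤) {K : Subgroup G} [K.Normal]
    (h : ∀ a ∈ S, ∀ b ∈ S, ∀ c ∈ S, ⁅⁅a, b⁆, c⁆ ∈ K) :
    (⊤ : Subgroup G).lowerCentralSeries 2 ≤ K := by
  have : K.upperCentralSeriesStep.Normal := by
    rw [Subgroup.upperCentralSeriesStep_eq_comap_center]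
    infer_instance
  have central_mod : ∀ a ∈ S, ∀ b ∈ S, ⁅a, b⁆ ∈ K.upperCentralSeriesStep := by
    intro a ha b hb t
    refine commutator_closure_le (S := {⁅a, b⁆}) (T := S) ?_
      (commutator_mem_commutator (subset_closure rfl) (hS ▸ mem_top t))
    rintro _ rfl c hc
    exact h a ha b hb c hc
  have commutator_le_step : ⁅(⊤ : Subgroup G), ⊤⁆ ≤ K.upperCentralSeriesStep := by
    rw [← hS]
    exact commutator_closure_le central_mod
  exact commutator_le.2 fun u hu t _ => commutator_le_step hu t

theorem alternating_word_mem_commutator (a b c d : G) :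
    a * b⁻¹ * c * d⁻¹ * (a⁻¹ * b * c⁻¹ * d) ∈ commutator G := by
  rw [← Abelianization.ker_of, MonoidHom.mem_ker, map_mul, mul_eq_one_iff_eq_inv]
  simp only [map_mul, map_inv, mul_inv, inv_inv]

end Commutators

section TwoEngel

theorem one_sub_mul_one_sub_add_swap {G R : Type*} [Group G] [Ring R] (ρ : G →* R)
    (hρ : ∀ g, (1 - ρ g) * (1 - ρ g) = 0) (g h : G) :
    (1 - ρ g) * (1 - ρ h) + (1 - ρ h) * (1 - ρ g) = 0 := by
  have map_inv_eq (g : G) : ρ g⁻¹ = 1 + (1 - ρ g) := by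
    have hg : ρ g * ρ g⁻¹ = 1 := by rw [← map_mul, mul_inv_cancel, map_one]
    calc ρ g⁻¹ = (1 - ρ g) * (1 - ρ g) * ρ g⁻¹ + (1 + (1 - ρ g)) * (ρ g * ρ g⁻¹) := by
          noncomm_ring
      _ = 1 + (1 - ρ g) := by rw [hρ, hg, zero_mul, zero_add, mul_one]
  have hgh : (1 + (1 - ρ h)) * (1 + (1 - ρ g)) = 1 + (1 - ρ g * ρ h) := by
    rw [← map_inv_eq, ← map_inv_eq, ← map_mul, ← map_mul, ← mul_inv_rev, map_inv_eq]
  calc (1 - ρ g) * (1 - ρ h) + (1 - ρ h) * (1 - ρ g)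
      = (1 + (1 - ρ h)) * (1 + (1 - ρ g)) - (1 + (1 - ρ g * ρ h)) := by noncomm_ring
    _ = 0 := by rw [hgh, sub_self]

variable {G : Type*} [Group G]

section conjEnd

open scoped IsMulCommutative

variable (A : Subgroup G) [A.Normal] [IsMulCommutative A]

/-- The action of `G` by conjugation on an abelian normal subgroup `A`, as a homomorphism to the
endomorphism ring of `A` written additively; `1 - conjEnd A g` is then the commutator map
`a ↦ ⁅a, g⁆`. -/
def conjEnd : G →* AddMonoid.End (Additive A) :=
  (monoidEndToAdditive A).toMonoidHom.comp
    ((MulDistribMulAction.toMonoidEnd (MulAut A) A).comp MulAut.conjNormal)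

theorem coe_one_sub_conjEnd (g : G) (a : Additive A) :
    (((1 - conjEnd A g) a).toMul : G) = ⁅(a.toMul : G), g⁆ := by
  have sub_apply : (1 - conjEnd A g) a = a - conjEnd A g a := rfl
  have coe_conjEnd : ((conjEnd A g a).toMul : G) = g * a.toMul * g⁻¹ := rfl
  rw [sub_apply, toMul_sub, coe_div, coe_conjEnd, commutatorElement_def, div_eq_mul_inv]
  group

end conjEnd

/-- The 2-Engel groups: `⁅⁅a, b⁆, b⁆ = 1` for all `a` and `b`. -/
def IsTwoEngel (G : Type*) [Group G] : Prop := ∀ a b : G, ⁅⁅a, b⁆, b⁆ = 1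

namespace IsTwoEngel

theorem commute_conj (hG : IsTwoEngel G) (a b : G) : Commute (b * a * b⁻¹) a := by
  have h : Commute ⁅b, a⁆ a := commutatorElement_eq_one_iff_commute.1 (hG b a)
  simpa [commutatorElement_def] using h.mul_left (Commute.refl a)

theorem isMulCommutative_normalClosure_singleton (hG : IsTwoEngel G) (a : G) :
    IsMulCommutative (normalClosure {a}) := by
  refine isMulCommutative_closure fun u hu v hv => ?_
  simp only [Group.mem_conjugatesOfSet_iff, Set.mem_singleton_iff, exists_eq_left,
    isConj_iff] at hu hv
  obtain ⟨c, rfl⟩ := hu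
  obtain ⟨d, rfl⟩ := hv
  simpa [mul_assoc] using (hG.commute_conj (d * a * d⁻¹) (c * d⁻¹)).eq

open scoped IsMulCommutative in
theorem commutator_swap_right (hG : IsTwoEngel G) (a b c : G) : ⁅⁅a, c⁆, b⁆ = ⁅⁅a, b⁆, c⁆⁻¹ := by
  have := hG.isMulCommutative_normalClosure_singleton a
  set A := normalClosure {a}
  let a' : Additive A := .ofMul ⟨a, subset_normalClosure rfl⟩
  have coe_apply_apply (g h : G) :
      (((1 - conjEnd A g) ((1 - conjEnd A h) a')).toMul : G) = ⁅⁅a, h⁆, g⁆ := by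
    rw [coe_one_sub_conjEnd, coe_one_sub_conjEnd, toMul_ofMul]
  have sq_eq_zero (g : G) : (1 - conjEnd A g) * (1 - conjEnd A g) = 0 := by
    ext u
    change (((1 - conjEnd A g) ((1 - conjEnd A g) u)).toMul : G) = 1
    rw [coe_one_sub_conjEnd, coe_one_sub_conjEnd, hG]
  -- On the abelian normal closure of `a`, the maps `⁅·, b⁆` and `⁅·, c⁆` anticommute.
  have h := DFunLike.congr_fun (one_sub_mul_one_sub_add_swap (conjEnd A) sq_eq_zero b c) a'
  rw [eq_inv_iff_mul_eq_one, ← coe_apply_apply, ← coe_apply_apply]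
  exact congrArg (fun u : Additive A => (u.toMul : G)) h

theorem commutator_inv_left (hG : IsTwoEngel G) (a b : G) : ⁅a⁻¹, b⁆ = ⁅a, b⁆⁻¹ := by
  have h : Commute ⁅b, a⁆ a := commutatorElement_eq_one_iff_commute.1 (hG b a)
  rw [commutatorElement_inv_left, commutatorElement_inv, mul_assoc, h.eq, inv_mul_cancel_left]

theorem commutator_swap_left (hG : IsTwoEngel G) (a b c : G) : ⁅⁅b, a⁆, c⁆ = ⁅⁅a, b⁆, c⁆⁻¹ := by
  rw [← commutatorElement_inv a b, hG.commutator_inv_left]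

theorem commutator_rotate (hG : IsTwoEngel G) (a b c : G) : ⁅⁅a, b⁆, c⁆ = ⁅⁅b, c⁆, a⁆ := by
  rw [hG.commutator_swap_right b a c, hG.commutator_swap_left a b c, inv_inv]

theorem commutator_mem_of_lt {ι : Type*} [LinearOrder ι] (hG : IsTwoEngel G) (s : ι → G)
    {K : Subgroup G} (hK : ∀ i j k, i < j → j < k → ⁅⁅s i, s j⁆, s k⁆ ∈ K) (i j k : ι) :
    ⁅⁅s i, s j⁆, s k⁆ ∈ K := by
  have of_le (i j k) (hij : i ≤ j) (hik : i ≤ k) : ⁅⁅s i, s j⁆, s k⁆ ∈ K := by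
    rcases hij.eq_or_lt with rfl | hij
    · simp
    rcases hik.eq_or_lt with rfl | hik
    · simp [hG.commutator_swap_right (s i) (s i)]
    rcases lt_trichotomy j k with hjk | rfl | hkj
    · exact hK i j k hij hjk
    · simp [hG (s i) (s j)]
    · rw [hG.commutator_swap_right]
      exact inv_mem (hK i k j hik hkj)
  obtain ⟨hij, hik⟩ | ⟨hjk, hji⟩ | ⟨hki, hkj⟩ :
      (i ≤ j ∧ i ≤ k) ∨ (j ≤ k ∧ j ≤ i) ∨ (k ≤ i ∧ k ≤ j) := by grind
  · exact of_le i j k hij hik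
  · rw [hG.commutator_rotate]
    exact of_le j k i hjk hji
  · rw [← hG.commutator_rotate]
    exact of_le k i j hki hkj

theorem commutator_four_inv (hG : IsTwoEngel G) (a b c d : G) :
    ⁅⁅⁅a, b⁆, c⁆, d⁆⁻¹ = ⁅⁅⁅a, b⁆, c⁆, d⁆ :=
  Eq.symm <| calc
    ⁅⁅⁅a, b⁆, c⁆, d⁆ = ⁅⁅⁅c, a⁆, b⁆, d⁆ := by rw [hG.commutator_rotate c a b]
    _ = ⁅⁅⁅c, a⁆, d⁆, b⁆⁻¹ := hG.commutator_swap_right _ _ _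
    _ = ⁅⁅⁅c, d⁆, a⁆, b⁆ := by
      rw [hG.commutator_swap_right c d a, hG.commutator_inv_left, inv_inv]
    _ = ⁅⁅a, b⁆, ⁅c, d⁆⁆ := hG.commutator_rotate _ _ _
    _ = ⁅⁅c, d⁆, ⁅a, b⁆⁆⁻¹ := (commutatorElement_inv _ _).symm
    _ = ⁅⁅⁅a, b⁆, c⁆, d⁆⁻¹ := by rw [hG.commutator_rotate ⁅a, b⁆]

end IsTwoEngel

end TwoEngel

section ExponentThree

variable {G : Type*} [Group G]

theorem mul_conj_mul_conj_inv (hG : ∀ g : G, g ^ 3 = 1) (a b : G) :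
    a * (b * a * b⁻¹) * (b⁻¹ * a * b) = 1 := by
  have hb : b⁻¹ * b⁻¹ = b := by
    rw [← mul_inv_rev, inv_eq_iff_mul_eq_one, ← pow_two, ← pow_succ, hG]
  calc a * (b * a * b⁻¹) * (b⁻¹ * a * b) = a * b * a * (b⁻¹ * b⁻¹) * a * b := by group
    _ = (a * b) ^ 3 := by simp only [hb, pow_succ, pow_zero, one_mul, mul_assoc]
    _ = 1 := hG _

theorem isTwoEngel_of_pow_three_eq_one (hG : ∀ g : G, g ^ 3 = 1) : IsTwoEngel G := fun b a => by
  have commute_of_mul_eq_one {p q : G} (hpq : a * p * q = 1) (hqp : a * q * p = 1) :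
      Commute p a := by
    rw [mul_assoc] at hpq hqp
    have h : Commute p q := mul_left_cancel (hpq.trans hqp.symm)
    rw [eq_inv_of_mul_eq_one_left hpq]
    exact ((Commute.refl p).mul_right h).inv_right
  have conj_commute : Commute (b * a * b⁻¹) a :=
    commute_of_mul_eq_one (mul_conj_mul_conj_inv hG a b)
      (by simpa using mul_conj_mul_conj_inv hG a b⁻¹)
  rw [commutatorElement_eq_one_iff_commute, commutatorElement_def]
  exact conj_commute.mul_left (Commute.refl a).inv_left

theorem commutator_commutator_mem_center (hG : ∀ g : G, g ^ 3 = 1) (a b c : G) :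
    ⁅⁅a, b⁆, c⁆ ∈ center G := by
  refine mem_center_iff.2 fun d => ?_
  have sq_eq_one : ⁅⁅⁅a, b⁆, c⁆, d⁆ ^ 2 = 1 := by
    rw [pow_two, mul_eq_one_iff_inv_eq,
      (isTwoEngel_of_pow_three_eq_one hG).commutator_four_inv]
  have eq_one := hG ⁅⁅⁅a, b⁆, c⁆, d⁆
  rw [pow_succ, sq_eq_one, one_mul] at eq_one
  exact (commutatorElement_eq_one_iff_mul_comm.1 eq_one).symm

theorem lowerCentralSeries_two_le_closure {ι : Type*} [LinearOrder ι] (hG : ∀ g : G, g ^ 3 = 1)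
    {s : ι → G} (hs : closure (Set.range s) = ⊤) :
    (⊤ : Subgroup G).lowerCentralSeries 2 ≤
      closure (Set.range fun t : {t : ι × ι × ι // t.1 < t.2.1 ∧ t.2.1 < t.2.2} =>
        ⁅⁅s t.1.1, s t.1.2.1⁆, s t.1.2.2⁆) := by
  set K := closure (Set.range fun t : {t : ι × ι × ι // t.1 < t.2.1 ∧ t.2.1 < t.2.2} =>
    ⁅⁅s t.1.1, s t.1.2.1⁆, s t.1.2.2⁆)
  have le_center : K ≤ center G := by
    rw [closure_le]
    rintro _ ⟨t, rfl⟩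
    exact commutator_commutator_mem_center hG _ _ _
  have : K.Normal := ⟨fun k hk g => by
    rwa [mem_center_iff.1 (le_center hk) g, mul_inv_cancel_right]⟩
  have sorted_mem (i j k : ι) (hij : i < j) (hjk : j < k) : ⁅⁅s i, s j⁆, s k⁆ ∈ K :=
    Subgroup.subset_closure ⟨⟨(i, j, k), hij, hjk⟩, rfl⟩
  refine lowerCentralSeries_two_le hs ?_
  rintro _ ⟨i, rfl⟩ _ ⟨j, rfl⟩ _ ⟨k, rfl⟩
  exact (isTwoEngel_of_pow_three_eq_one hG).commutator_mem_of_lt s sorted_mem i j k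

end ExponentThree

section Cardinality

variable {G : Type*} [Group G]

open scoped IsMulCommutative in
theorem card_closure_dvd_pow {k : Set G} [Finite k] {n : ℕ} (comm : ∀ g ∈ k, ∀ h ∈ k, g * h = h * g)
    (exponent : ∀ g ∈ closure k, g ^ n = 1) : Nat.card (closure k) ∣ n ^ Nat.card k := by
  have := isMulCommutative_closure comm
  exact (card_dvd_exponent_pow_rank' _ fun g => Subtype.ext (exponent g g.2)).trans
    (pow_dvd_pow n (rank_closure_finite_le_nat_card k))

theorem card_lowerCentralSeries_two_dvd {ι : Type*} [LinearOrder ι] [Finite ι]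
    (hG : ∀ g : G, g ^ 3 = 1) {s : ι → G} (hs : closure (Set.range s) = ⊤) :
    Nat.card ((⊤ : Subgroup G).lowerCentralSeries 2) ∣
      3 ^ Nat.card {t : ι × ι × ι // t.1 < t.2.1 ∧ t.2.1 < t.2.2} := by
  refine (card_dvd_of_le (lowerCentralSeries_two_le_closure hG hs)).trans <|
    (card_closure_dvd_pow ?_ fun g _ => hG g).trans (pow_dvd_pow 3 (Finite.card_range_le _))
  rintro _ ⟨t, rfl⟩ h -
  exact (mem_center_iff.1 (commutator_commutator_mem_center hG _ _ _) h).symm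

theorem pow_le_card_closure_range {H ι : Type*} [Group H] {n k : ℕ} [NeZero n] {g : Fin k → G}
    [Finite (closure (Set.range g))] (f : ι → G →* H) {ζ : Multiplicative (ZMod n) →* H}
    (hζ : Function.Injective ζ) {A : Matrix ι (Fin k) (ZMod n)} (hA : Function.Injective A.mulVec)
    (hf : ∀ j i, f j (g i) = ζ (.ofAdd (A j i))) : n ^ k ≤ Nat.card (closure (Set.range g)) := by
  let word (v : Fin k → ZMod n) : closure (Set.range g) :=
    (List.ofFn fun i => (⟨g i, subset_closure ⟨i, rfl⟩⟩ : closure (Set.range g)) ^ (v i).val).prod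
  have map_word (v : Fin k → ZMod n) (j : ι) :
      f j (word v) = ζ (.ofAdd (A.mulVec v j)) := by
    have smul (i : Fin k) : (v i).val • A j i = A j i * v i := by
      rw [nsmul_eq_mul, ZMod.natCast_zmod_val, mul_comm]
    simp only [word, val_list_prod, map_list_prod, List.map_ofFn, Function.comp_def, coe_pow,
      map_pow, hf, ← map_pow ζ, ← ofAdd_nsmul, smul, Matrix.mulVec, dotProduct]
    rw [← Function.comp_def ζ, ← List.map_ofFn, ← map_list_prod, List.prod_ofFn, ofAdd_sum]
  have word_injective : Function.Injective word := fun v w h => hA <| funext fun j =>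
    Multiplicative.ofAdd.injective <| hζ <| by rw [← map_word, ← map_word, h]
  simpa using Nat.card_le_card_of_injective word word_injective

end Cardinality

/-- The affine maps `u ↦ h * u + a` of the exterior algebra of `R²` (basis `1, e₁, e₂, e₁ ∧ e₂`),
where `h = 1 + h₁ e₁ + h₂ e₂ + h₁₂ e₁ ∧ e₂` and `a = a₀ + a₁ e₁ + a₂ e₂ + a₁₂ e₁ ∧ e₂`; when `3 = 0`
in `R` they form a group of exponent 3, with multiplication the composition of maps. -/
@[ext]
structure ExteriorAffine (R : Type*) where
  a₀ : R
  a₁ : R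
  a₂ : R
  a₁₂ : R
  h₁ : R
  h₂ : R
  h₁₂ : R

namespace ExteriorAffine

instance {R : Type*} [DecidableEq R] : DecidableEq (ExteriorAffine R) := fun _ _ =>
  decidable_of_iff _ ExteriorAffine.ext_iff.symm

section Group

variable {R : Type*} [CommRing R]

@[simps]
instance : Mul (ExteriorAffine R) where
  mul g g' :=
    { a₀ := g.a₀ + g'.a₀
      a₁ := g.a₁ + g'.a₁ + g.h₁ * g'.a₀
      a₂ := g.a₂ + g'.a₂ + g.h₂ * g'.a₀
      a₁₂ := g.a₁₂ + g'.a₁₂ + g.h₁ * g'.a₂ - g.h₂ * g'.a₁ + g.h₁₂ * g'.a₀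
      h₁ := g.h₁ + g'.h₁
      h₂ := g.h₂ + g'.h₂
      h₁₂ := g.h₁₂ + g'.h₁₂ + g.h₁ * g'.h₂ - g.h₂ * g'.h₁ }

@[simps]
instance : One (ExteriorAffine R) where
  one := ⟨0, 0, 0, 0, 0, 0, 0⟩

@[simps]
instance : Inv (ExteriorAffine R) where
  inv g :=
    { a₀ := -g.a₀
      a₁ := -g.a₁ + g.h₁ * g.a₀
      a₂ := -g.a₂ + g.h₂ * g.a₀
      a₁₂ := -g.a₁₂ + g.h₁ * g.a₂ - g.h₂ * g.a₁ + g.h₁₂ * g.a₀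
      h₁ := -g.h₁
      h₂ := -g.h₂
      h₁₂ := -g.h₁₂ }

instance : Group (ExteriorAffine R) := .ofLeftAxioms
  (fun g h k => by
    ext <;> simp only [mul_a₀, mul_a₁, mul_a₂, mul_a₁₂, mul_h₁, mul_h₂, mul_h₁₂] <;> ring)
  (fun g => by ext <;> simp)
  (fun g => by ext <;> simp <;> ring)

theorem pow_three_eq_one [CharP R 3] (g : ExteriorAffine R) : g ^ 3 = 1 := by
  have three_eq_zero : (3 : R) = 0 := CharP.ofNat_eq_zero R 3
  rw [pow_succ, pow_two]
  ext <;> simp only [mul_a₀, mul_a₁, mul_a₂, mul_a₁₂, mul_h₁, mul_h₂, mul_h₁₂,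
    one_a₀, one_a₁, one_a₂, one_a₁₂, one_h₁, one_h₂, one_h₁₂]
  · linear_combination g.a₀ * three_eq_zero
  · linear_combination (g.a₁ + g.h₁ * g.a₀) * three_eq_zero
  · linear_combination (g.a₂ + g.h₂ * g.a₀) * three_eq_zero
  · linear_combination (g.a₁₂ + g.h₁ * g.a₂ - g.h₂ * g.a₁ + g.h₁₂ * g.a₀) * three_eq_zero
  · linear_combination g.h₁ * three_eq_zero
  · linear_combination g.h₂ * three_eq_zero
  · linear_combination g.h₁₂ * three_eq_zero

/-- The embedding of `R` as the translations by multiples of `e₁ ∧ e₂`, which are central. -/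
def translation : Multiplicative R →* ExteriorAffine R where
  toFun r := ⟨0, 0, 0, r.toAdd, 0, 0, 0⟩
  map_one' := rfl
  map_mul' r s := by ext <;> simp

theorem translation_injective : Function.Injective (translation (R := R)) := fun _ _ h =>
  congrArg a₁₂ h

end Group

/-- The translation by `1` and the multiplications by `1 + e₁` and `1 + e₂`. -/
def gen (R : Type*) [CommRing R] : Fin 3 → ExteriorAffine R :=
  ![⟨1, 0, 0, 0, 0, 0, 0⟩, ⟨0, 0, 0, 0, 1, 0, 0⟩, ⟨0, 0, 0, 0, 0, 1, 0⟩]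

end ExteriorAffine

namespace B43

theorem pow_three_eq_one (g : B43) : g ^ 3 = 1 := by
  induction g using QuotientGroup.induction_on with
  | H w => exact (QuotientGroup.eq_one_iff (w ^ 3)).2 (subset_normalClosure ⟨w, rfl⟩)

theorem closure_range_x : closure (Set.range x) = ⊤ := by
  rw [show x = QuotientGroup.mk' _ ∘ FreeGroup.of from rfl, Set.range_comp,
    ← MonoidHom.map_closure, FreeGroup.closure_range_of,
    map_top_of_surjective _ (QuotientGroup.mk'_surjective _)]

theorem card_lowerCentralSeries_two_dvd_pow :
    Nat.card ((⊤ : Subgroup B43).lowerCentralSeries 2) ∣ 3 ^ 4 := by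
  have card_triples : Nat.card {t : Fin 4 × Fin 4 × Fin 4 // t.1 < t.2.1 ∧ t.2.1 < t.2.2} = 4 := by
    rw [Nat.card_eq_fintype_card]
    decide
  simpa only [card_triples] using card_lowerCentralSeries_two_dvd pow_three_eq_one closure_range_x

variable {H : Type*} [Group H]

/-- The universal property of `B(4,3)` among groups of exponent 3. -/
def lift (hH : ∀ h : H, h ^ 3 = 1) (v : Fin 4 → H) : B43 →* H :=
  QuotientGroup.lift _ (FreeGroup.lift v) <| normalClosure_le_normal <| by
    rintro _ ⟨w, rfl⟩
    exact (map_pow (FreeGroup.lift v) w 3).trans (hH _)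

@[simp]
theorem lift_x (hH : ∀ h : H, h ^ 3 = 1) (v : Fin 4 → H) (i : Fin 4) : lift hH v (x i) = v i :=
  (QuotientGroup.lift_mk' _ _ _).trans FreeGroup.lift_apply_of

/-- The homomorphism from `B(4,3)` to the affine group that kills the `j`-th generator and sends
the other three to `ExteriorAffine.gen` in order. -/
def killGen (j : Fin 4) : B43 →* ExteriorAffine (ZMod 3) :=
  lift ExteriorAffine.pow_three_eq_one (Fin.insertNth j 1 (ExteriorAffine.gen (ZMod 3)))

end B43

theorem P_mem_lowerCentralSeries (i : Fin 4) : P i ∈ (⊤ : Subgroup B43).lowerCentralSeries 2 := by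
  have P_eq : P i = ⁅x 0 * (x 1)⁻¹ * x 2 * (x 3)⁻¹ * ((x 0)⁻¹ * x 1 * (x 2)⁻¹ * x 3),
      x i * ((x 0)⁻¹ * x 1 * (x 2)⁻¹ * x 3)⁆ := by
    rw [P, commutatorElement_def]
    group
  rw [P_eq]
  exact commutator_mem_commutator (alternating_word_mem_commutator _ _ _ _) (mem_top _)

/-- The entry `(j, i)` is the coordinate of `P i` along `e₁ ∧ e₂` when the `j`-th generator is
killed. -/
def coordMatrix : Matrix (Fin 4) (Fin 4) (ZMod 3) :=
  !![1, -1, -1, -1; 0, -1, 1, 1; 0, 0, 1, -1; 0, 0, 0, -1]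

theorem mulVec_coordMatrix_injective : Function.Injective coordMatrix.mulVec := by
  rw [Matrix.mulVec_injective_iff_isUnit, Matrix.isUnit_iff_isUnit_det]
  decide

theorem killGen_P (j i : Fin 4) :
    B43.killGen j (P i) = ExteriorAffine.translation (.ofAdd (coordMatrix j i)) := by
  simp only [B43.killGen, P, map_mul, map_inv, B43.lift_x]
  revert i j
  decide

/-- `P₁, P₂, P₃, P₄` form a basis of the third term `γ₃(B(4,3)) = [[G,G],G]` of the
lower central series (Mathlib: `lowerCentralSeries B43 2`, since `γ₁` has index `0`):
they generate it, and it has exactly `3⁴ = 81` elements. -/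
theorem P_basis_gamma3 :
    Subgroup.closure ({P 0, P 1, P 2, P 3} : Set B43) = Subgroup.lowerCentralSeries (⊤ : Subgroup B43) 2 ∧
    Nat.card (Subgroup.lowerCentralSeries (⊤ : Subgroup B43) 2) = 81 := by
  have range_P : {P 0, P 1, P 2, P 3} = Set.range P := by
    ext
    simp [Fin.exists_fin_succ, eq_comm]
  have card_dvd := B43.card_lowerCentralSeries_two_dvd_pow
  have card_le := Nat.le_of_dvd (by norm_num) card_dvd
  have : Finite ((⊤ : Subgroup B43).lowerCentralSeries 2) :=
    Nat.finite_of_card_ne_zero (ne_zero_of_dvd_ne_zero (by norm_num) card_dvd)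
  have closure_le_gamma : closure (Set.range P) ≤ (⊤ : Subgroup B43).lowerCentralSeries 2 :=
    (closure_le _).2 (Set.range_subset_iff.2 P_mem_lowerCentralSeries)
  have : Finite (closure (Set.range P)) := Finite.Set.subset _ closure_le_gamma
  have le_card : 3 ^ 4 ≤ Nat.card (closure (Set.range P)) :=
    pow_le_card_closure_range B43.killGen ExteriorAffine.translation_injective
      mulVec_coordMatrix_injective killGen_P
  have closure_eq := eq_of_le_of_card_ge closure_le_gamma (card_le.trans le_card)
  exact ⟨range_P ▸ closure_eq, card_le.antisymm (closure_eq ▸ le_card)⟩
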